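/- arXiv:2002.03253 — 2 statements merged into one kernel-verified Lean document; each statement's English description precedes it below -/
import Mathlib

section
/- Let B be a unital complex C*-algebra with identity 1, and let m : B × B → B be a bilinear map which is an associative product with the same identity, i.e. m(m(x,y),z) = m(x,m(y,z)), m(1,x) = m(x,1) = x, and which is submultiplicative for the given norm: ‖m(x,y)‖ ≤ ‖x‖·‖y‖ for all x, y, z ∈ B. Then the symmetrization of m recovers the original Jordan product: m(x,y) + m(y,x) = x·y + y·x for all x, y ∈ B. -/
set_option maxHeartbeats 1000000
set_option synthInstance.maxHeartbeats 1000000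

/-!
For self-adjoint `h` the operator `T = m(h, ·)` is Hermitian on the Banach space `B`, because
`‖x + itTx‖ = ‖m(1 + ith, x)‖ ≤ √(1 + t²‖h‖²) ‖x‖`. For a unitary `u` this forces `u* T(u)` to be
self-adjoint (`isSelfAdjoint_of_norm_le`, `isSelfAdjoint_exp_mul`). Taking `u = exp(isk)` with `k`
self-adjoint and differentiating at `s = 0` once and twice shows that `T(x) = hx + iδ(x)`, where
`δ = D(h, ·)` preserves self-adjointness and satisfies `δ(k²) = kδ(k) + δ(k)k`.

Put `q = δ(h)`, so that `m(h,h) = h² + iq`. Evaluating the associativity relation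
`m(h, m(h,x)) = m(m(h,h), x)` at `x = h` and at `x = h²`, and comparing self-adjoint parts, gives
`q² = 0`; hence `q = 0` and `m(h,h) = h²`. Polarization and complex linearity finish the proof.
-/

open Complex NormedSpace

/-- An element is self-adjoint as soon as `‖1 + itc‖² ≤ 1 + Mt²` for all real `t`. Indeed
`1 + it(c - c*) ≤ (1 + itc)*(1 + itc) ≤ 1 + Mt²`; dividing by `t` and letting `t → 0` from either
side gives `i(c - c*) ≤ 0` and `i(c - c*) ≥ 0`. -/
lemma isSelfAdjoint_of_norm_le {B : Type*} [CStarAlgebra B] (c : B) (M : ℝ)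
    (hc : ∀ t : ℝ, ‖1 + (t * I) • c‖ ^ 2 ≤ 1 + t ^ 2 * M) : IsSelfAdjoint c := by
  let _ := CStarAlgebra.spectralOrder B
  have := CStarAlgebra.spectralOrderedRing B
  set d : B := I • (c - star c) with hd
  have key : ∀ t : ℝ, t • d ≤ algebraMap ℝ B (t ^ 2 * M) := by
    intro t
    have h1 : star (1 + (t * I) • c) * (1 + (t * I) • c) ≤
        algebraMap ℝ B (‖1 + (t * I) • c‖ ^ 2) := CStarAlgebra.star_mul_le_algebraMap_norm_sq
    have h2 : algebraMap ℝ B (‖1 + (t * I) • c‖ ^ 2) ≤ algebraMap ℝ B (1 + t ^ 2 * M) :=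
      algebraMap_mono B (hc t)
    have h3 : star (1 + (t * I) • c) * (1 + (t * I) • c) =
        1 + t • d + star ((t : ℂ) • c) * ((t : ℂ) • c) := by
      have : t • d = (t : ℂ) • d := (Complex.coe_smul t d).symm
      rw [this, hd]
      simp only [star_add, star_one, star_smul, star_mul', Complex.star_def, conj_ofReal, conj_I,
        add_mul, mul_add, one_mul, mul_one, smul_mul_smul_comm]
      have e : (t * -I : ℂ) * (t * I) = t * t := by
        linear_combination (-(t:ℂ) * t) * I_mul_I
      rw [e]
      module
    have h4 := star_mul_self_nonneg ((t : ℂ) • c)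
    have h5 := h1.trans h2
    rw [h3, map_add, map_one] at h5
    have h6 : 1 + t • d ≤ 1 + algebraMap ℝ B (t ^ 2 * M) :=
      (le_add_of_nonneg_right h4).trans h5
    exact le_of_add_le_add_left h6
  have lim : Filter.Tendsto (fun t : ℝ => algebraMap ℝ B (t * M)) (nhdsWithin 0 (Set.Ioi 0))
      (nhds 0) := by
    have : Continuous (fun t : ℝ => algebraMap ℝ B (t * M)) := by fun_prop
    simpa using (this.tendsto 0).mono_left nhdsWithin_le_nhds
  have hpos : ∀ e : B, (∀ t : ℝ, 0 < t → t • e ≤ algebraMap ℝ B (t ^ 2 * M)) → e ≤ 0 := by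
    intro e he
    refine ge_of_tendsto lim ?_
    filter_upwards [self_mem_nhdsWithin] with t (ht : 0 < t)
    have := smul_le_smul_of_nonneg_left (he t ht) (inv_pos.2 ht).le
    rw [smul_smul, inv_mul_cancel₀ ht.ne', one_smul, Algebra.smul_def, ← map_mul] at this
    convert this using 2
    field_simp
  have hle : d ≤ 0 := hpos d fun t _ => key t
  have hge : -d ≤ 0 := hpos (-d) fun t _ => by
    have := key (-t)
    simpa using this
  have hd0 : d = 0 := le_antisymm hle (by simpa using hge)
  have : c - star c = 0 := by simpa [hd] using hd0
  exact (sub_eq_zero.1 this).symm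

lemma norm_one_add_sq_le {B : Type*} [CStarAlgebra B] {h : B} (hh : IsSelfAdjoint h) (t : ℝ) :
    ‖1 + (t * I) • h‖ ^ 2 ≤ 1 + t ^ 2 * ‖h‖ ^ 2 := by
  rcases subsingleton_or_nontrivial B with hB | hB
  · have : 1 + (t * I) • h = 0 := Subsingleton.elim _ _
    have h0 : (0 : ℝ) ≤ 1 + t ^ 2 * ‖h‖ ^ 2 := by positivity
    simpa [this] using h0
  rw [sq ‖_‖, ← CStarRing.norm_star_mul_self]
  have : star (1 + (t * I) • h) * (1 + (t * I) • h) = 1 + ((t : ℂ) ^ 2) • (h * h) := by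
    simp only [star_add, star_one, star_smul, star_mul', Complex.star_def, conj_ofReal, conj_I,
      add_mul, mul_add, one_mul, mul_one, smul_mul_smul_comm, hh.star_eq]
    have e : (t * -I : ℂ) * (t * I) = t ^ 2 := by
      linear_combination (-(t:ℂ) * t) * I_mul_I
    rw [e]
    module
  rw [this]
  refine (norm_add_le _ _).trans ?_
  rw [norm_smul, norm_one]
  have := norm_mul_le h h
  have h2 : ‖(t : ℂ) ^ 2‖ = t ^ 2 := by simp
  rw [h2, sq ‖h‖]
  gcongr

/-- For `u = exp(isk)`, the element `u* m(h,u)` is self-adjoint. -/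
lemma isSelfAdjoint_exp_mul {B : Type*} [CStarAlgebra B] (m : B →ₗ[ℂ] B →ₗ[ℂ] B)
    (hone : ∀ x : B, m 1 x = x ∧ m x 1 = x) (hnorm : ∀ x y : B, ‖m x y‖ ≤ ‖x‖ * ‖y‖)
    {h k : B} (hh : IsSelfAdjoint h) (hk : IsSelfAdjoint k) (s : ℝ) :
    IsSelfAdjoint (exp (s • (-(I • k))) * m h (exp (s • (I • k)))) := by
  have hsk : s • (I • k) ∈ skewAdjoint B := by
    rw [skewAdjoint.mem_iff]
    simp [hk.star_eq]
  have hu : exp (s • (I • k)) ∈ unitary B := by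
    let _ : NormedAlgebra ℚ B := NormedAlgebra.restrictScalars ℚ ℂ B
    exact exp_mem_unitary_of_mem_skewAdjoint hsk
  have hst : exp (s • (-(I • k))) = star (exp (s • (I • k))) := by
    rw [star_exp, (skewAdjoint.mem_iff.1 hsk), smul_neg]
  rw [hst]
  set u := exp (s • (I • k)) with hudef
  refine isSelfAdjoint_of_norm_le _ (‖h‖ ^ 2) fun t => ?_
  refine le_trans ?_ (norm_one_add_sq_le hh t)
  have e : 1 + (t * I) • (star u * m h u) = star u * m (1 + (t * I) • h) u := by
    simp [(hone u).1, mul_add, Unitary.star_mul_self_of_mem hu]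
  rw [e]
  gcongr
  rw [CStarRing.norm_mem_unitary_mul _ (Unitary.star_mem hu)]
  refine (hnorm _ _).trans ?_
  have : ‖u‖ ≤ 1 := by
    rcases subsingleton_or_nontrivial B with hB | hB
    · simp [Subsingleton.elim u 0]
    · exact (CStarRing.norm_of_mem_unitary hu).le
  exact mul_le_of_le_one_right (norm_nonneg _) this

/-- Differentiation along `s ↦ exp(isk)`: the operator `x ↦ i(S(kx) - kS(x))` inherits the
self-adjointness property from `S`. -/
lemma isSelfAdjoint_deriv {B : Type*} [CStarAlgebra B] (S : B →L[ℂ] B) (k : B)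
    (hS : ∀ s : ℝ, IsSelfAdjoint (exp (s • (-(I • k))) * S (exp (s • (I • k))))) (s : ℝ) :
    IsSelfAdjoint (exp (s • (-(I • k))) *
      (I • (S ∘L ContinuousLinearMap.mul ℂ B k - ContinuousLinearMap.mul ℂ B k ∘L S) :
        B →L[ℂ] B) (exp (s • (I • k)))) := by
  have h1 : HasDerivAt (fun s : ℝ => exp (s • (-(I • k))))
      (exp (s • (-(I • k))) * (-(I • k))) s := hasDerivAt_exp_smul_const _ s
  have h2 : HasDerivAt (fun s : ℝ => exp (s • (I • k)))
      ((I • k) * exp (s • (I • k))) s := hasDerivAt_exp_smul_const' _ s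
  have h3 := ((S.restrictScalars ℝ).hasFDerivAt (x := exp (s • (I • k)))).comp_hasDerivAt s h2
  have h4 := h1.mul h3
  have h5 := h4.star
  have e := h5.congr_of_eventuallyEq (f₁ := fun s : ℝ => exp (s • (-(I • k))) *
    S (exp (s • (I • k)))) (Filter.Eventually.of_forall fun r => (hS r).star_eq.symm)
  have h6 := e.unique h4
  have h7 : ∀ x : B, (I • (S ∘L ContinuousLinearMap.mul ℂ B k
      - ContinuousLinearMap.mul ℂ B k ∘L S) : B →L[ℂ] B) x
      = -(I • k) * S x + S ((I • k) * x) := by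
    intro x
    simp [smul_sub]
    abel
  rw [h7, mul_add, ← mul_assoc]
  exact h6

/-- The bilinear map `D(x,y) = -i(m(x,y) - xy)`, measuring the deviation of `m` from the given
product: `m(x,y) = xy + iD(x,y)`. -/
noncomputable def devMap {B : Type*} [CStarAlgebra B] (m : B →ₗ[ℂ] B →ₗ[ℂ] B) :
    B →ₗ[ℂ] B →ₗ[ℂ] B := (-I) • (m - LinearMap.mul ℂ B)

lemma eq_mul_add_devMap {B : Type*} [CStarAlgebra B] (m : B →ₗ[ℂ] B →ₗ[ℂ] B) (x y : B) :
    m x y = x * y + I • devMap m x y := by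
  simp [devMap, smul_smul]

/-- For self-adjoint `h`, the operator `D(h, ·)` preserves self-adjointness and acts on squares of
self-adjoint elements as a Jordan derivation. -/
lemma devMap_props {B : Type*} [CStarAlgebra B] (m : B →ₗ[ℂ] B →ₗ[ℂ] B)
    (hone : ∀ x : B, m 1 x = x ∧ m x 1 = x) (hnorm : ∀ x y : B, ‖m x y‖ ≤ ‖x‖ * ‖y‖)
    {h k : B} (hh : IsSelfAdjoint h) (hk : IsSelfAdjoint k) :
    star (devMap m h k) = devMap m h k ∧
      devMap m h (k * k) = k * devMap m h k + devMap m h k * k := by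
  let T : B →L[ℂ] B := (m h).mkContinuous ‖h‖ (hnorm h)
  have hT : ∀ x, T x = h * x + I • devMap m h x := fun x => eq_mul_add_devMap m h x
  have d1 : devMap m h 1 = 0 := by simp [devMap, (hone h).2]
  have h1 : ∀ {k : B}, IsSelfAdjoint k → ∀ s : ℝ, _ := fun {k} hk =>
    isSelfAdjoint_deriv T k (isSelfAdjoint_exp_mul m hone hnorm hh hk)
  -- The first derivative at `s = 0`.
  have hst : ∀ {k : B}, IsSelfAdjoint k → star (devMap m h k) = devMap m h k := by
    intro k hk
    have a1 := (h1 hk 0).star_eq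
    simp [hT, d1, hh.star_eq, hk.star_eq, smul_sub, smul_smul] at a1
    linear_combination (norm := module) -a1
  refine ⟨hst hk, ?_⟩
  -- The second derivative at `s = 0`.
  have a2 := (isSelfAdjoint_deriv _ k (h1 hk) 0).star_eq
  have hkk : IsSelfAdjoint (k * k) := by simpa [sq] using hk.pow 2
  simp [hT, d1, hh.star_eq, hk.star_eq, hst hk, hst hkk, smul_sub, smul_smul, mul_add,
    ← mul_assoc] at a2
  have a3 := congrArg (fun x => I • x) a2
  simp only [smul_add, smul_sub, smul_neg, smul_smul, I_mul_I, neg_smul, one_smul] at a3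
  have e : (2 : ℂ) • devMap m h (k * k) =
      (2 : ℂ) • (k * devMap m h k + devMap m h k * k) := by
    linear_combination (norm := module) -a3
  exact smul_right_injective B (two_ne_zero (α := ℂ)) e

/-- The deviation `q = D(h,h)` vanishes for self-adjoint `h`: associativity of `m`, together with
the Jordan derivation property of `D(h, ·)` and `D(q, ·)`, yields `q² = 0`. -/
lemma devMap_self {B : Type*} [CStarAlgebra B] (m : B →ₗ[ℂ] B →ₗ[ℂ] B)
    (hassoc : ∀ x y z : B, m (m x y) z = m x (m y z))
    (hone : ∀ x : B, m 1 x = x ∧ m x 1 = x) (hnorm : ∀ x y : B, ‖m x y‖ ≤ ‖x‖ * ‖y‖)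
    {h : B} (hh : IsSelfAdjoint h) : devMap m h h = 0 := by
  have P := @devMap_props B _ m hone hnorm
  -- Polarization of `D(g, k²) = kD(g,k) + D(g,k)k` in `k`.
  have lin : ∀ {g k l : B}, IsSelfAdjoint g → IsSelfAdjoint k → IsSelfAdjoint l →
      devMap m g (k * l + l * k) = k * devMap m g l + devMap m g l * k
        + l * devMap m g k + devMap m g k * l := by
    intro g k l hg hk hl
    have e := (P hg (hk.add hl)).2
    have e1 := (P hg hk).2
    have e2 := (P hg hl).2
    have : (k + l) * (k + l) = k * k + (k * l + l * k) + l * l := by noncomm_ring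
    rw [this, map_add, map_add (devMap m g) (k * k), e1, e2, map_add (devMap m g) k l] at e
    have e' : devMap m g (k * l + l * k) =
        (k * devMap m g k + devMap m g k * k + devMap m g (k * l + l * k)
          + (l * devMap m g l + devMap m g l * l))
        - (k * devMap m g k + devMap m g k * k) - (l * devMap m g l + devMap m g l * l) := by
      abel
    rw [e', e]
    noncomm_ring
  set q := devMap m h h with hq
  have sh2 : IsSelfAdjoint (h * h) := by simpa [sq] using hh.pow 2
  have sq' : IsSelfAdjoint q := (P hh hh).1
  set r := devMap m h q with hr
  have sr : IsSelfAdjoint r := (P hh sq').1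
  set w := devMap m q h with hw
  have sw : IsSelfAdjoint w := (P sq' hh).1
  set v := devMap m (h * h) h with hv
  have sv : IsSelfAdjoint v := (P sh2 hh).1
  set z := devMap m (h * h) (h * h) with hz
  have sz : IsSelfAdjoint z := (P sh2 sh2).1
  have dh2 : devMap m h (h * h) = h * q + q * h := (P hh hh).2
  have dhq : devMap m h (h * q + q * h) = h * r + r * h + q * q + q * q := lin hh hh sq'
  have dqh2 : devMap m q (h * h) = h * w + w * h := (P sq' hh).2
  have dh3 : devMap m h (h * (h * h)) = h * h * q + h * q * h + q * h * h := by
    have e := lin hh hh sh2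
    rw [dh2, mul_assoc, ← two_smul ℂ, map_smul, ← hq] at e
    have e2 : (2 : ℂ) • devMap m h (h * (h * h))
        = (2 : ℂ) • (h * h * q + h * q * h + q * h * h) := by
      rw [e]
      simp only [two_smul]
      noncomm_ring
    exact smul_right_injective B (two_ne_zero (α := ℂ)) e2
  -- Associativity `m(m(h,h), x) = m(h, m(h,x))`, used at `x = h` and `x = h²`.
  have A : ∀ x, I • devMap m (h * h) x + I • (q * x) - devMap m q x =
      I • (h * devMap m h x) + I • devMap m h (h * x) - devMap m h (devMap m h x) := by
    intro x
    have e := hassoc h h x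
    simp only [eq_mul_add_devMap m, map_add, map_smul, LinearMap.add_apply, LinearMap.smul_apply,
      ← hq, smul_add, smul_smul, I_mul_I, mul_add, mul_smul_comm, neg_smul, one_smul,
      ← mul_assoc] at e
    linear_combination (norm := module) e
  have A1 := A h
  have A2 := A (h * h)
  rw [dh2, ← hq, ← hr, ← hv, ← hw] at A1
  -- The self-adjoint part of the first relation.
  have B1 : w = r - I • (h * q - q * h) := by
    have A1s := congrArg star A1
    simp only [star_add, star_sub, star_mul, star_smul, hh.star_eq, sq'.star_eq, sr.star_eq,
      sw.star_eq, sv.star_eq, Complex.star_def, conj_I] at A1s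
    have e : (2 : ℂ) • w = (2 : ℂ) • (r - I • (h * q - q * h)) := by
      linear_combination (norm := module) -A1 - A1s
    exact smul_right_injective B (two_ne_zero (α := ℂ)) e
  rw [dh3, dh2, dhq, dqh2, B1, ← hz] at A2
  -- The second relation reads `i(h²q + 2hqh + qh²) - 2q² = iz`.
  have C : (2 : ℂ) • (q * q) = I • (h * h * q + (2 : ℂ) • (h * q * h) + q * h * h - z) := by
    simp only [mul_sub, sub_mul, mul_add, mul_smul_comm, smul_mul_assoc, ← mul_assoc] at A2
    linear_combination (norm := module) A2
  have Cs := congrArg star C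
  simp only [star_add, star_sub, star_mul, star_smul, hh.star_eq, sq'.star_eq, sz.star_eq,
    Complex.star_def, conj_I, map_ofNat, ← mul_assoc] at Cs
  -- `q²` and `z` are self-adjoint, so the factor `I` makes the right side skew-adjoint.
  have D : (4 : ℂ) • (q * q) = 0 := by
    linear_combination (norm := module) C + Cs
  have qq : q * q = 0 := by simpa using D
  have : ‖q‖ * ‖q‖ = 0 := by
    rw [← CStarRing.norm_star_mul_self, sq'.star_eq, qq, norm_zero]
  simpa using this

/-- Any Banach algebra product `m` on a unital C*-algebra `B` with the same identity
has symmetrization equal to the original Jordan product: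
`m(x,y) + m(y,x) = xy + yx`. -/
theorem stmt_18 {B : Type*} [CStarAlgebra B]
    (m : B →ₗ[ℂ] B →ₗ[ℂ] B)
    (hassoc : ∀ x y z : B, m (m x y) z = m x (m y z))
    (hone : ∀ x : B, m 1 x = x ∧ m x 1 = x)
    (hnorm : ∀ x y : B, ‖m x y‖ ≤ ‖x‖ * ‖y‖) :
    ∀ x y : B, m x y + m y x = x * y + y * x := by
  have S : ∀ {h k : B}, IsSelfAdjoint h → IsSelfAdjoint k →
      devMap m h k + devMap m k h = 0 := by
    intro h k hh hk
    have e := devMap_self m hassoc hone hnorm (hh.add hk)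
    have e1 := devMap_self m hassoc hone hnorm hh
    have e2 := devMap_self m hassoc hone hnorm hk
    simpa [e1, e2, add_comm] using e
  intro x y
  suffices hxy : devMap m x y + devMap m y x = 0 by
    rw [eq_mul_add_devMap m x y, eq_mul_add_devMap m y x]
    linear_combination (norm := module) I • hxy
  rw [← realPart_add_I_smul_imaginaryPart x, ← realPart_add_I_smul_imaginaryPart y]
  have a := S (realPart x).2 (realPart y).2
  have b := S (realPart x).2 (imaginaryPart y).2
  have c := S (imaginaryPart x).2 (realPart y).2
  have d := S (imaginaryPart x).2 (imaginaryPart y).2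
  simp only [map_add, map_smul, LinearMap.add_apply, LinearMap.smul_apply]
  linear_combination (norm := module) a + I • b + I • c + (I * I) • d
end

section
/- Let s be a real number with 0 ≤ s ≤ 1 and let μ ∈ ℂ. Then |s·a + (1−s)·c + μ·x| ≤ ‖M‖ for all a, x, c ∈ ℂ, where M is the 2×2 complex matrix with rows (a, x) and (0, c) and ‖M‖ is its operator norm as an operator on ℂ² (ℓ²-operator norm), if and only if |μ|² ≤ s·(1−s). -/
/-!
On upper triangular matrices the functional is `M ↦ tr (M D)` with `D = !![s, conj μ; μ, 1 - s]`,
a Hermitian matrix of trace one, and the condition `|μ|² ≤ s (1 - s)` says that `D` is positive.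

If `D` is positive, completing the square gives, with `v = (s, μ)`,
`s φ(M) = ⟪v, M v⟫ + (s (1 - s) - |μ|²) ⟪e₂, M e₂⟫`, and bounding both terms by `‖M‖` gives
`s |φ(M)| ≤ s ‖M‖` (the case `s = 0` is trivial because then `μ = 0`).

Conversely, let `N` be upper triangular with Hermitian part `-v v*`, where `v = (t, -μ)`. Since
`N` is dissipative, `‖1 + ε N‖ ≤ 1 + O(ε²)`
(`norm_one_add_smul_le`), while `Re φ(1 + ε N) = 1 - ε v* D v`. Letting `ε → 0` gives
`s t² - 2 |μ|² t + (1 - s) |μ|² ≥ 0` for every real `t`, and the discriminant of this quadratic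
yields the claim.
-/

open Matrix ComplexConjugate

set_option maxHeartbeats 1000000
set_option synthInstance.maxHeartbeats 1000000

/-- For a dissipative operator `T`, the norm of `1 + ε T` exceeds `1` only to second order in `ε`. -/
lemma norm_one_add_smul_le {E : Type*} [NormedAddCommGroup E] [InnerProductSpace ℂ E]
    (T : E →L[ℂ] E) (hT : ∀ u, (inner ℂ u (T u)).re ≤ 0) {ε : ℝ} (hε : 0 ≤ ε) :
    ‖1 + (ε : ℂ) • T‖ ≤ 1 + ε ^ 2 * ‖T‖ ^ 2 := by
  refine ContinuousLinearMap.opNorm_le_bound _ (by positivity) fun u => ?_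
  have h1 : ‖u + (ε : ℂ) • T u‖ ^ 2 =
      ‖u‖ ^ 2 + 2 * (ε * (inner ℂ u (T u)).re) + (ε * ‖T u‖) ^ 2 := by
    rw [norm_add_sq (𝕜 := ℂ), inner_smul_right, norm_smul]
    simp [abs_of_nonneg hε]
  have h2 : (ε * ‖T u‖) ^ 2 ≤ (ε * (‖T‖ * ‖u‖)) ^ 2 := by
    gcongr
    exact T.le_opNorm u
  have h3 : ε * (inner ℂ u (T u)).re ≤ 0 := mul_nonpos_of_nonneg_of_nonpos hε (hT u)
  change ‖u + (ε : ℂ) • T u‖ ≤ _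
  refine (le_abs_self _).trans (abs_le_of_sq_le_sq ?_ (by positivity))
  nlinarith [sq_nonneg (ε ^ 2 * ‖T‖ ^ 2 * ‖u‖), sq_nonneg (ε * ‖T‖ * ‖u‖)]

lemma norm_inner_toEuclideanCLM_le (M : Matrix (Fin 2) (Fin 2) ℂ) (v : EuclideanSpace ℂ (Fin 2)) :
    ‖inner ℂ v (toEuclideanCLM (𝕜 := ℂ) M v)‖ ≤ ‖toEuclideanCLM (𝕜 := ℂ) M‖ * ‖v‖ ^ 2 := by
  have h1 := norm_inner_le_norm (𝕜 := ℂ) v (toEuclideanCLM (𝕜 := ℂ) M v)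
  have h2 := (toEuclideanCLM (𝕜 := ℂ) M).le_opNorm v
  nlinarith [norm_nonneg v]

lemma inner_toEuclideanCLM (a x c y z : ℂ) :
    inner ℂ !₂[y, z] (toEuclideanCLM (𝕜 := ℂ) !![a, x; 0, c] !₂[y, z]) =
      conj y * (a * y + x * z) + conj z * (c * z) := by
  simp [PiLp.inner_apply, Fin.sum_univ_two, vecHead, vecTail]
  ring

lemma functional_le_norm {s : ℝ} (hs0 : 0 ≤ s) {μ : ℂ} (h : ‖μ‖ ^ 2 ≤ s * (1 - s))
    (a x c : ℂ) :
    ‖(s : ℂ) * a + (1 - (s : ℂ)) * c + μ * x‖ ≤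
      ‖toEuclideanCLM (𝕜 := ℂ) !![a, x; 0, c]‖ := by
  set M := toEuclideanCLM (𝕜 := ℂ) !![a, x; 0, c] with hM
  have hc : ‖c‖ ≤ ‖M‖ := by
    have := norm_inner_toEuclideanCLM_le !![a, x; 0, c] !₂[0, 1]
    rw [inner_toEuclideanCLM] at this
    simpa [EuclideanSpace.norm_sq_eq] using this
  rcases hs0.eq_or_lt with rfl | hs
  · have : μ = 0 := by
      have : ‖μ‖ ^ 2 = 0 := le_antisymm (by simpa using h) (by positivity)
      simpa using this
    simpa [this] using hc
  have hv := norm_inner_toEuclideanCLM_le !![a, x; 0, c] !₂[(s : ℂ), μ]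
  rw [inner_toEuclideanCLM, ← hM] at hv
  have hn : ‖(!₂[(s : ℂ), μ] : EuclideanSpace ℂ (Fin 2))‖ ^ 2 = s ^ 2 + ‖μ‖ ^ 2 := by
    simp [EuclideanSpace.norm_sq_eq]
  rw [hn] at hv
  have key : (s : ℂ) * ((s : ℂ) * a + (1 - (s : ℂ)) * c + μ * x) =
      (conj (s : ℂ) * (a * s + x * μ) + conj μ * (c * μ)) +
        ((s * (1 - s) - ‖μ‖ ^ 2 : ℝ) : ℂ) * c := by
    have := Complex.conj_mul' μ
    push_cast
    rw [Complex.conj_ofReal]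
    linear_combination -c * this
  have h2 : ‖((s * (1 - s) - ‖μ‖ ^ 2 : ℝ) : ℂ) * c‖ ≤ (s * (1 - s) - ‖μ‖ ^ 2) * ‖M‖ := by
    rw [norm_mul, Complex.norm_real, Real.norm_of_nonneg (by linarith)]
    exact mul_le_mul_of_nonneg_left hc (by linarith)
  have h3 := norm_add_le (conj (s : ℂ) * (a * s + x * μ) + conj μ * (c * μ))
    (((s * (1 - s) - ‖μ‖ ^ 2 : ℝ) : ℂ) * c)
  rw [← key, norm_mul, Complex.norm_real, Real.norm_of_nonneg hs0] at h3
  refine le_of_mul_le_mul_left ?_ hs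
  linarith

/-- Testing the functional on `1 + ε N` shows that the quadratic form of `!![s, conj μ; μ, 1 - s]`
is nonnegative on the vectors that detect its determinant. -/
lemma quadratic_nonneg {s : ℝ} {μ : ℂ}
    (h : ∀ a x c : ℂ, ‖(s : ℂ) * a + (1 - (s : ℂ)) * c + μ * x‖ ≤
      ‖toEuclideanCLM (𝕜 := ℂ) !![a, x; 0, c]‖) (t : ℝ) :
    0 ≤ s * (t * t) + (-2 * ‖μ‖ ^ 2) * t + (1 - s) * ‖μ‖ ^ 2 := by
  set Q := s * (t * t) + (-2 * ‖μ‖ ^ 2) * t + (1 - s) * ‖μ‖ ^ 2 with hQ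
  set N : Matrix (Fin 2) (Fin 2) ℂ := !![-(t : ℂ) ^ 2, 2 * t * conj μ; 0, -(‖μ‖ : ℂ) ^ 2] with hN
  set T := toEuclideanCLM (𝕜 := ℂ) N with hT
  have hdiss : ∀ u, (inner ℂ u (T u)).re ≤ 0 := by
    intro u
    have hu : u = !₂[u 0, u 1] := by
      ext i; fin_cases i <;> rfl
    rw [hu, hT, hN, inner_toEuclideanCLM, ← Complex.conj_mul']
    generalize u 0 = y
    generalize u 1 = z
    -- The real part is `-|t y - conj μ z|²`.
    have h0 := Complex.normSq_nonneg ((t : ℂ) * y - conj μ * z)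
    simp [Complex.normSq_apply, pow_two] at h0 ⊢
    nlinarith
  have hε : ∀ ε : ℝ, 0 ≤ ε → 1 - ε * Q ≤ 1 + ε ^ 2 * ‖T‖ ^ 2 := by
    intro ε hε
    refine le_trans ?_ (norm_one_add_smul_le T hdiss hε)
    have hM : toEuclideanCLM (𝕜 := ℂ)
        !![1 + ε * (-(t : ℂ) ^ 2), ε * (2 * t * conj μ); 0, 1 + ε * (-(‖μ‖ : ℂ) ^ 2)] =
        1 + (ε : ℂ) • T := by
      rw [hT, ← map_smul, ← map_one (toEuclideanCLM (𝕜 := ℂ) (n := Fin 2)), ← map_add]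
      congr 1
      ext i j
      fin_cases i <;> fin_cases j <;> simp [hN]
    have h1 := h (1 + ε * (-(t : ℂ) ^ 2)) (ε * (2 * t * conj μ)) (1 + ε * (-(‖μ‖ : ℂ) ^ 2))
    rw [hM] at h1
    refine le_trans ?_ h1
    have h2 : (s : ℂ) * (1 + ε * (-(t : ℂ) ^ 2)) + (1 - (s : ℂ)) * (1 + ε * (-(‖μ‖ : ℂ) ^ 2)) +
        μ * (ε * (2 * t * conj μ)) = ((1 - ε * Q : ℝ) : ℂ) := by
      have := Complex.conj_mul' μ
      rw [hQ]
      push_cast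
      linear_combination 2 * ε * t * this
    rw [h2, Complex.norm_real]
    exact le_abs_self _
  by_contra! hneg
  -- For `ε = -Q / (‖T‖² + 1)` the linear term beats the quadratic one.
  have hK : 0 < ‖T‖ ^ 2 + 1 := by positivity
  have hpos : 0 < -Q / (‖T‖ ^ 2 + 1) := div_pos (by linarith) hK
  have h1 := hε _ hpos.le
  have h2 : -Q / (‖T‖ ^ 2 + 1) * (‖T‖ ^ 2 + 1) = -Q := by field_simp
  nlinarith [mul_pos hpos hpos]

/-- The functional on upper triangular `2 × 2` matrices sending `!![a, x; 0, c]` to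
`s·a + (1-s)·c + μ·x` is dominated by the operator norm if and only if
`|μ|² ≤ s(1-s)`. -/
theorem stmt_19 (s : ℝ) (hs0 : 0 ≤ s) (hs1 : s ≤ 1) (μ : ℂ) :
    (∀ a x c : ℂ, ‖(s : ℂ) * a + (1 - (s : ℂ)) * c + μ * x‖ ≤
        ‖Matrix.toEuclideanCLM (𝕜 := ℂ) !![a, x; 0, c]‖) ↔
      ‖μ‖ ^ 2 ≤ s * (1 - s) := by
  refine ⟨fun h => ?_, fun h a x c => functional_le_norm hs0 h a x c⟩
  have hd := discrim_le_zero (quadratic_nonneg h)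
  unfold discrim at hd
  rcases (sq_nonneg ‖μ‖).eq_or_lt with h0 | h0
  · rw [← h0]
    exact mul_nonneg hs0 (by linarith)
  · refine le_of_mul_le_mul_right ?_ h0
    linarith
end
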